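/- Strong completeness of ELDF: for every formula φ and every set Φ of formulas of the language ELDF, if Φ semantically entails φ over similarity models (every pointed similarity model satisfying all formulas of Φ satisfies φ), then Φ ⊢_ELDF φ (i.e., there is a finite subset {ψ_1,…,ψ_n} ⊆ Φ such that (ψ_1 ∧ … ∧ ψ_n) → φ is a theorem of ELDF). -/

import Mathlib

/-- Formulas of the language ELDF over a set `Ag` of agents, with
propositional variables drawn from the countably infinite set `ℕ`.  Groups
are nonempty finite sets of agents. -/
inductive Formula (Ag : Type) : Type
  | atom : ℕ → Formula Ag
  | neg  : Formula Ag → Formula Ag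
  | impl : Formula Ag → Formula Ag → Formula Ag
  | K    : Ag → Formula Ag → Formula Ag
  | D    : (G : Finset Ag) → G.Nonempty → Formula Ag → Formula Ag
  | F    : (G : Finset Ag) → G.Nonempty → Formula Ag → Formula Ag

/-- A similarity model `(W, A, E, C, ν)`. -/
structure SimModel (Ag : Type) where
  W : Type
  A : Type
  w_nonempty : Nonempty W
  E : W → W → Set A
  Cap : Ag → Set A
  val : W → Set ℕ
  positivity : ∀ s t : W, E s t = Set.univ → s = t
  symmetry : ∀ s t : W, E s t = E t s

/-- Satisfaction on similarity models. -/
def SimModel.sat {Ag : Type} (M : SimModel Ag) : M.W → Formula Ag → Prop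
  | s, .atom p => p ∈ M.val s
  | s, .neg φ => ¬ M.sat s φ
  | s, .impl φ ψ => M.sat s φ → M.sat s ψ
  | s, .K a φ => ∀ t, M.Cap a ⊆ M.E s t → M.sat t φ
  | s, .D G _ φ => ∀ t, (⋃ a ∈ G, M.Cap a) ⊆ M.E s t → M.sat t φ
  | s, .F G _ φ => ∀ t, (⋂ a ∈ G, M.Cap a) ⊆ M.E s t → M.sat t φ

namespace Formula
/-- Conjunction, defined from the primitive connectives. -/
def and {Ag : Type} (φ ψ : Formula Ag) : Formula Ag := .neg (φ.impl ψ.neg)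
/-- A fixed tautology. -/
def top {Ag : Type} : Formula Ag := (atom 0).impl (atom 0)
/-- Biconditional, defined from the primitive connectives. -/
def iff {Ag : Type} (φ ψ : Formula Ag) : Formula Ag := (φ.impl ψ).and (ψ.impl φ)
end Formula

/-- `φ` is a propositional tautology: it evaluates to `true` under every
assignment of truth values to formulas that respects negation and implication
(thereby treating atoms and modal formulas as propositional atoms). -/
def IsTautology {Ag : Type} (φ : Formula Ag) : Prop :=
  ∀ v : Formula Ag → Bool,
    (∀ ψ : Formula Ag, v ψ.neg = !v ψ) →
    (∀ ψ χ : Formula Ag, v (ψ.impl χ) = (!v ψ || v χ)) →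
    v φ = true

/-- The axiomatic system ELDF: the least set of formulas containing all propositional tautologies, closed under modus ponens, necessitation for each `K_a` and the rule NF, and containing the axiom schemes K, B, KD, D1, D2, BD, KF, F1, F2 and BF. -/
inductive Prov {Ag : Type} : Formula Ag → Prop
  | taut {φ : Formula Ag} : IsTautology φ → Prov φ
  | mp {φ ψ : Formula Ag} : Prov (φ.impl ψ) → Prov φ → Prov ψ
  | nec {φ : Formula Ag} (a : Ag) : Prov φ → Prov (.K a φ)
  | kK {φ ψ : Formula Ag} (a : Ag) :
      Prov ((Formula.K a (φ.impl ψ)).impl ((Formula.K a φ).impl (.K a ψ)))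
  | axB {φ : Formula Ag} (a : Ag) :
      Prov (φ.impl (.K a (Formula.neg (.K a φ.neg))))
  | kD {φ ψ : Formula Ag} (G : Finset Ag) (hG : G.Nonempty) :
      Prov ((Formula.D G hG (φ.impl ψ)).impl ((Formula.D G hG φ).impl (.D G hG ψ)))
  | d1 {φ : Formula Ag} (a : Ag) :
      Prov ((Formula.D {a} (Finset.singleton_nonempty a) φ).iff (.K a φ))
  | d2 {φ : Formula Ag} (G H : Finset Ag) (hG : G.Nonempty) (hH : H.Nonempty)
      (hGH : G ⊆ H) : Prov ((Formula.D G hG φ).impl (.D H hH φ))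
  | bd {φ : Formula Ag} (G : Finset Ag) (hG : G.Nonempty) :
      Prov (φ.impl (.D G hG (Formula.neg (.D G hG φ.neg))))
  | kF {φ ψ : Formula Ag} (G : Finset Ag) (hG : G.Nonempty) :
      Prov ((Formula.F G hG (φ.impl ψ)).impl ((Formula.F G hG φ).impl (.F G hG ψ)))
  | f1 {φ : Formula Ag} (a : Ag) :
      Prov ((Formula.F {a} (Finset.singleton_nonempty a) φ).iff (.K a φ))
  | f2 {φ : Formula Ag} (G H : Finset Ag) (hG : G.Nonempty) (hH : H.Nonempty)
      (hHG : H ⊆ G) : Prov ((Formula.F G hG φ).impl (.F H hH φ))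
  | bf {φ : Formula Ag} (G : Finset Ag) (hG : G.Nonempty) :
      Prov (φ.impl (.F G hG (Formula.neg (.F G hG φ.neg))))
  | nf {φ : Formula Ag} (G : Finset Ag) (hG : G.Nonempty) :
      Prov φ → Prov (.F G hG φ)

/-!
The box of a group modality depends only on the abilities that two states must share in order to be
related. Abilities can be taken to be finite sets of agents, where exactly the members of `X` have
the ability `X`: then the axioms of ELDF prove `□ₘ φ → □ₙ φ` whenever the abilities required by `m`
are among those required by `n`.

The canonical model has to be modified so that any two states are related by at most one modality,
since otherwise two unrelated edges could jointly provide the abilities of a third modality. This is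
achieved by multiplying it with the hypercube of sets of modalities: an `m`-edge of the canonical
model is kept between `(Γ, x)` and `(Δ, y)` precisely when `x ∆ y = {m}`. Positivity is automatic
because the ability `∅`, which no agent has, is never shared.
-/

section

variable {Ag : Type}

namespace Prov

variable {φ ψ χ : Formula Ag}

theorem impl_refl (φ : Formula Ag) : Prov (φ.impl φ) :=
  taut fun v _ himpl => by grind

theorem impl_impl_left (φ ψ : Formula Ag) : Prov (φ.impl (ψ.impl φ)) :=
  taut fun v _ himpl => by grind

theorem impl_distrib (χ φ ψ : Formula Ag) :
    Prov ((χ.impl (φ.impl ψ)).impl ((χ.impl φ).impl (χ.impl ψ))) :=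
  taut fun v _ himpl => by grind

theorem impl_neg_neg (φ : Formula Ag) : Prov (φ.impl φ.neg.neg) :=
  taut fun v hneg himpl => by grind

theorem neg_impl_impl (φ ψ : Formula Ag) : Prov (φ.neg.impl (φ.impl ψ)) :=
  taut fun v hneg himpl => by grind

theorem impl_cases (φ ψ : Formula Ag) :
    Prov ((φ.impl ψ).impl ((φ.neg.impl ψ).impl ψ)) :=
  taut fun v hneg himpl => by grind

theorem and_impl_left (φ ψ : Formula Ag) : Prov ((φ.and ψ).impl φ) :=
  taut fun v hneg himpl => by grind [Formula.and]

theorem and_impl_right (φ ψ : Formula Ag) : Prov ((φ.and ψ).impl ψ) :=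
  taut fun v hneg himpl => by grind [Formula.and]

theorem iff_mp (h : Prov (φ.iff ψ)) : Prov (φ.impl ψ) :=
  mp (and_impl_left _ _) h

theorem iff_mpr (h : Prov (φ.iff ψ)) : Prov (ψ.impl φ) :=
  mp (and_impl_right _ _) h

theorem trans (hφψ : Prov (φ.impl ψ)) (hψχ : Prov (ψ.impl χ)) : Prov (φ.impl χ) :=
  mp (mp (impl_distrib φ ψ χ) (mp (impl_impl_left _ _) hψχ)) hφψ

theorem foldr_and_impl_of_mem {L : List (Formula Ag)} (hφ : φ ∈ L) :
    Prov ((L.foldr Formula.and Formula.top).impl φ) := by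
  induction hφ with
  | head L => exact and_impl_left _ _
  | tail ψ _ ih => exact (and_impl_right _ _).trans ih

theorem D_impl_K {G : Finset Ag} (hG : G.Nonempty) {a : Ag} (hGa : G ⊆ {a}) (φ : Formula Ag) :
    Prov ((Formula.D G hG φ).impl (.K a φ)) :=
  (d2 G {a} hG _ hGa).trans (d1 a).iff_mp

theorem K_impl_D {G : Finset Ag} (hG : G.Nonempty) {a : Ag} (ha : a ∈ G) (φ : Formula Ag) :
    Prov ((Formula.K a φ).impl (.D G hG φ)) :=
  (d1 a).iff_mpr.trans (d2 {a} G _ hG (Finset.singleton_subset_iff.2 ha))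

theorem F_impl_K {G : Finset Ag} (hG : G.Nonempty) {a : Ag} (ha : a ∈ G) (φ : Formula Ag) :
    Prov ((Formula.F G hG φ).impl (.K a φ)) :=
  (f2 G {a} hG _ (Finset.singleton_subset_iff.2 ha)).trans (f1 a).iff_mp

theorem K_impl_F {G : Finset Ag} (hG : G.Nonempty) {a : Ag} (hGa : G ⊆ {a}) (φ : Formula Ag) :
    Prov ((Formula.K a φ).impl (.F G hG φ)) :=
  (f1 a).iff_mpr.trans (f2 {a} G _ hG hGa)

end Prov

/-- Derivability `Φ ⊢ φ` from hypotheses. Modus ponens is the only rule that applies to formulas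
depending on hypotheses, so the deduction theorem holds. -/
inductive Derivable (Φ : Set (Formula Ag)) : Formula Ag → Prop
  | prov {φ : Formula Ag} : Prov φ → Derivable Φ φ
  | hyp {φ : Formula Ag} : φ ∈ Φ → Derivable Φ φ
  | mp {φ ψ : Formula Ag} : Derivable Φ (φ.impl ψ) → Derivable Φ φ → Derivable Φ ψ

namespace Derivable

variable {Φ Ψ : Set (Formula Ag)} {φ ψ χ : Formula Ag}

theorem mono (hΦΨ : Φ ⊆ Ψ) (h : Derivable Φ φ) : Derivable Ψ φ := by
  induction h with
  | prov hφ => exact prov hφ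
  | hyp hφ => exact hyp (hΦΨ hφ)
  | mp _ _ ihimpl ih => exact mp ihimpl ih

theorem prov_of_empty (h : Derivable ∅ φ) : Prov φ := by
  induction h with
  | prov hφ => exact hφ
  | hyp hφ => exact hφ.elim
  | mp _ _ ihimpl ih => exact ihimpl.mp ih

theorem weaken (χ : Formula Ag) (h : Derivable Φ φ) : Derivable Φ (χ.impl φ) :=
  mp (prov (Prov.impl_impl_left φ χ)) h

theorem impl_of_forall_mem (hΨ : ∀ ψ ∈ Ψ, Derivable Φ (χ.impl ψ)) (h : Derivable Ψ φ) :
    Derivable Φ (χ.impl φ) := by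
  induction h with
  | prov hφ => exact (prov hφ).weaken χ
  | hyp hφ => exact hΨ _ hφ
  | mp _ _ ihimpl ih => exact mp (mp (prov (Prov.impl_distrib _ _ _)) ihimpl) ih

theorem impl_of_insert (h : Derivable (insert χ Φ) φ) : Derivable Φ (χ.impl φ) := by
  refine h.impl_of_forall_mem fun ψ hψ => ?_
  rcases hψ with rfl | hψ
  · exact prov (Prov.impl_refl ψ)
  · exact (hyp hψ).weaken χ

theorem exists_list (h : Derivable Φ φ) :
    ∃ L : List (Formula Ag), (∀ ψ ∈ L, ψ ∈ Φ) ∧ Derivable {ψ | ψ ∈ L} φ := by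
  induction h with
  | prov hφ => exact ⟨[], by simp, prov hφ⟩
  | @hyp φ hφ => exact ⟨[φ], by simpa using hφ, hyp (by simp)⟩
  | mp _ _ ihimpl ih =>
    obtain ⟨L₁, hL₁, h₁⟩ := ihimpl
    obtain ⟨L₂, hL₂, h₂⟩ := ih
    refine ⟨L₁ ++ L₂, by simpa [or_imp, forall_and] using ⟨hL₁, hL₂⟩, mp (h₁.mono ?_) (h₂.mono ?_)⟩
    · exact fun ψ hψ => List.mem_append_left L₂ hψ
    · exact fun ψ hψ => List.mem_append_right L₁ hψ

theorem exists_prov_foldr_and_impl (h : Derivable Φ φ) :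
    ∃ L : List (Formula Ag), (∀ ψ ∈ L, ψ ∈ Φ) ∧
      Prov ((L.foldr Formula.and Formula.top).impl φ) := by
  obtain ⟨L, hLΦ, hL⟩ := h.exists_list
  exact ⟨L, hLΦ, (hL.impl_of_forall_mem fun _ hψ =>
    prov (Prov.foldr_and_impl_of_mem hψ)).prov_of_empty⟩

theorem exists_mem_of_sUnion {c : Set (Set (Formula Ag))} (hne : c.Nonempty)
    (hc : IsChain (· ⊆ ·) c) (h : Derivable (⋃₀ c) φ) : ∃ Ψ ∈ c, Derivable Ψ φ := by
  obtain ⟨L, hLc, hL⟩ := h.exists_list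
  obtain ⟨Ψ, hΨ, hLΨ⟩ := hc.directedOn.exists_mem_subset_of_finite_of_subset_sUnion hne
    L.finite_toSet hLc
  exact ⟨Ψ, hΨ, hL.mono hLΨ⟩

theorem exists_maximal_not (h : ¬ Derivable Φ φ) :
    ∃ Ψ, Φ ⊆ Ψ ∧ Maximal (fun Ψ => ¬ Derivable Ψ φ) Ψ := by
  refine zorn_subset_nonempty {Ψ | ¬ Derivable Ψ φ} (fun c hc hchain hne => ?_) Φ h
  refine ⟨⋃₀ c, fun hφ => ?_, fun Ψ => Set.subset_sUnion_of_mem⟩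
  obtain ⟨Ψ, hΨ, hΨφ⟩ := hφ.exists_mem_of_sUnion hne hchain
  exact hc hΨ hΨφ

theorem impl_of_notMem_maximal (hΦ : Maximal (fun Ψ => ¬ Derivable Ψ φ) Φ) (hψ : ψ ∉ Φ) :
    Derivable Φ (ψ.impl φ) := by
  by_contra hnot
  exact hψ (hΦ.mem_of_prop_insert fun h => hnot h.impl_of_insert)

theorem mem_of_maximal (hΦ : Maximal (fun Ψ => ¬ Derivable Ψ φ) Φ) (h : Derivable Φ ψ) :
    ψ ∈ Φ := by
  by_contra hψ
  exact hΦ.prop (mp (impl_of_notMem_maximal hΦ hψ) h)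

end Derivable

/-- Maximal consistent sets, presented as the theories that contain exactly one of `φ` and `¬φ` for
every formula `φ`. -/
structure MaxConsistent (Ag : Type) where
  carrier : Set (Formula Ag)
  mem_of_prov' {φ : Formula Ag} : Prov φ → φ ∈ carrier
  mp' {φ ψ : Formula Ag} : φ.impl ψ ∈ carrier → φ ∈ carrier → ψ ∈ carrier
  neg_mem_iff' (φ : Formula Ag) : φ.neg ∈ carrier ↔ φ ∉ carrier

namespace MaxConsistent

instance : SetLike (MaxConsistent Ag) (Formula Ag) where
  coe := carrier
  coe_injective := fun ⟨_, _, _, _⟩ ⟨_, _, _, _⟩ h => by cases h; rfl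

variable {Γ : MaxConsistent Ag} {φ ψ : Formula Ag}

theorem mem_of_prov (h : Prov φ) : φ ∈ Γ := Γ.mem_of_prov' h

theorem mp (h : φ.impl ψ ∈ Γ) (hφ : φ ∈ Γ) : ψ ∈ Γ := Γ.mp' h hφ

theorem neg_mem_iff : φ.neg ∈ Γ ↔ φ ∉ Γ := Γ.neg_mem_iff' φ

theorem mem_of_prov_impl (h : Prov (φ.impl ψ)) (hφ : φ ∈ Γ) : ψ ∈ Γ := mp (mem_of_prov h) hφ

theorem impl_mem_iff : φ.impl ψ ∈ Γ ↔ (φ ∈ Γ → ψ ∈ Γ) := by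
  refine ⟨mp, fun h => ?_⟩
  by_cases hφ : φ ∈ Γ
  · exact mem_of_prov_impl (Prov.impl_impl_left ψ φ) (h hφ)
  · exact mem_of_prov_impl (Prov.neg_impl_impl φ ψ) (neg_mem_iff.2 hφ)

/-- A set that is maximal among those not deriving a fixed formula is a maximal consistent set. -/
def ofMaximal {Φ : Set (Formula Ag)} (hΦ : Maximal (fun Ψ => ¬ Derivable Ψ φ) Φ) :
    MaxConsistent Ag where
  carrier := Φ
  mem_of_prov' h := Derivable.mem_of_maximal hΦ (.prov h)
  mp' h hφ := Derivable.mem_of_maximal hΦ (.mp (.hyp h) (.hyp hφ))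
  neg_mem_iff' ψ := by
    constructor
    · intro hneg hψ
      exact hΦ.prop (.mp (.mp (.prov (Prov.neg_impl_impl ψ φ)) (.hyp hneg)) (.hyp hψ))
    · intro hψ
      by_contra hneg
      exact hΦ.prop (.mp (.mp (.prov (Prov.impl_cases ψ φ))
        (Derivable.impl_of_notMem_maximal hΦ hψ)) (Derivable.impl_of_notMem_maximal hΦ hneg))

theorem exists_of_not_derivable {Φ : Set (Formula Ag)} (h : ¬ Derivable Φ φ) :
    ∃ Γ : MaxConsistent Ag, (∀ ψ ∈ Φ, ψ ∈ Γ) ∧ φ ∉ Γ := by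
  obtain ⟨Ψ, hΦΨ, hΨ⟩ := Derivable.exists_maximal_not h
  exact ⟨ofMaximal hΨ, fun ψ hψ => hΦΨ hψ, fun hφ => hΨ.prop (.hyp hφ)⟩

end MaxConsistent

/-- The group modalities `D_G` and `F_G`. The individual modality `K_a` is represented by
`D_{a}`, to which it is provably equivalent. -/
inductive Modality (Ag : Type) : Type
  | D (G : Finset Ag) (hG : G.Nonempty) : Modality Ag
  | F (G : Finset Ag) (hG : G.Nonempty) : Modality Ag

namespace Modality

/-- The formula `□ₘ φ`. -/
def box : Modality Ag → Formula Ag → Formula Ag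
  | D G hG, φ => .D G hG φ
  | F G hG, φ => .F G hG φ

/-- The abilities that two states must share for `m` to relate them, where an ability is the finite
set of the agents that have it. -/
def abilities : Modality Ag → Set (Finset Ag)
  | D G _ => ⋃ a ∈ G, {X | a ∈ X}
  | F G _ => ⋂ a ∈ G, {X | a ∈ X}

variable {φ ψ : Formula Ag}

theorem mem_abilities_D {G X : Finset Ag} {hG : G.Nonempty} :
    X ∈ (D G hG).abilities ↔ ∃ a ∈ G, a ∈ X := by
  simp [abilities]

theorem mem_abilities_F {G X : Finset Ag} {hG : G.Nonempty} :
    X ∈ (F G hG).abilities ↔ G ⊆ X := by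
  simp [abilities, Finset.subset_iff]

theorem abilities_nonempty (m : Modality Ag) : m.abilities.Nonempty := by
  cases m with
  | D G hG => exact ⟨G, mem_abilities_D.2 (hG.imp fun a ha => ⟨ha, ha⟩)⟩
  | F G hG => exact ⟨G, mem_abilities_F.2 subset_rfl⟩

theorem empty_notMem_abilities (m : Modality Ag) : ∅ ∉ m.abilities := by
  cases m with
  | D G hG => simp [mem_abilities_D]
  | F G hG => simpa [mem_abilities_F, ← Finset.nonempty_iff_ne_empty] using hG

theorem prov_box (m : Modality Ag) (h : Prov φ) : Prov (m.box φ) := by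
  cases m with
  | D G hG =>
    obtain ⟨a, ha⟩ := id hG
    exact (Prov.K_impl_D hG ha φ).mp (h.nec a)
  | F G hG => exact h.nf G hG

theorem prov_box_impl_distrib (m : Modality Ag) (φ ψ : Formula Ag) :
    Prov ((m.box (φ.impl ψ)).impl ((m.box φ).impl (m.box ψ))) := by
  cases m with
  | D G hG => exact .kD G hG
  | F G hG => exact .kF G hG

theorem prov_box_impl_box (m : Modality Ag) (h : Prov (φ.impl ψ)) :
    Prov ((m.box φ).impl (m.box ψ)) :=
  (m.prov_box_impl_distrib φ ψ).mp (m.prov_box h)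

theorem prov_impl_box_neg_box_neg (m : Modality Ag) (φ : Formula Ag) :
    Prov (φ.impl (m.box (m.box φ.neg).neg)) := by
  cases m with
  | D G hG => exact .bd G hG
  | F G hG => exact .bf G hG

theorem subset_of_abilities_D_subset_D {H G : Finset Ag} {hH : H.Nonempty} {hG : G.Nonempty}
    (h : (D H hH).abilities ⊆ (D G hG).abilities) : H ⊆ G := by
  intro a ha
  simpa [mem_abilities_D] using h (mem_abilities_D.2 ⟨a, ha, Finset.mem_singleton_self a⟩)

theorem exists_subset_singleton_of_abilities_D_subset_F {H G : Finset Ag} {hH : H.Nonempty}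
    {hG : G.Nonempty} (h : (D H hH).abilities ⊆ (F G hG).abilities) :
    ∃ a, H ⊆ {a} ∧ G ⊆ {a} := by
  have hGsub : ∀ a ∈ H, G ⊆ {a} := fun a ha =>
    mem_abilities_F.1 (h (mem_abilities_D.2 ⟨a, ha, Finset.mem_singleton_self a⟩))
  obtain ⟨g, hg⟩ := hG
  have hHg : ∀ a ∈ H, a = g := fun a ha => (Finset.mem_singleton.1 (hGsub a ha hg)).symm
  obtain ⟨a, ha⟩ := hH
  exact ⟨g, fun b hb => Finset.mem_singleton.2 (hHg b hb), hHg a ha ▸ hGsub a ha⟩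

theorem prov_box_impl_box_of_abilities_subset {m n : Modality Ag}
    (h : m.abilities ⊆ n.abilities) (φ : Formula Ag) : Prov ((m.box φ).impl (n.box φ)) := by
  cases m with
  | D H hH =>
    cases n with
    | D G hG => exact .d2 H G hH hG (subset_of_abilities_D_subset_D h)
    | F G hG =>
      obtain ⟨a, hHa, hGa⟩ := exists_subset_singleton_of_abilities_D_subset_F h
      exact (Prov.D_impl_K hH hHa φ).trans (Prov.K_impl_F hG hGa φ)
  | F H hH =>
    have hmem := h (mem_abilities_F.2 (subset_refl H))
    cases n with
    | D G hG =>
      obtain ⟨a, haG, haH⟩ := mem_abilities_D.1 hmem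
      exact (Prov.F_impl_K hH haH φ).trans (Prov.K_impl_D hG haG φ)
    | F G hG => exact .f2 H G hH hG (mem_abilities_F.1 hmem)

end Modality

namespace MaxConsistent

variable {Γ Δ : MaxConsistent Ag} {m n : Modality Ag} {φ : Formula Ag}

theorem K_mem_iff {a : Ag} :
    Formula.K a φ ∈ Γ ↔ (Modality.D {a} (Finset.singleton_nonempty a)).box φ ∈ Γ :=
  ⟨mem_of_prov_impl (Prov.d1 a).iff_mpr, mem_of_prov_impl (Prov.d1 a).iff_mp⟩

/-- The canonical accessibility relation of the modality `m`. -/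
def Accessible (m : Modality Ag) (Γ Δ : MaxConsistent Ag) : Prop :=
  ∀ φ, m.box φ ∈ Γ → φ ∈ Δ

theorem Accessible.symm (h : Accessible m Γ Δ) : Accessible m Δ Γ := by
  intro φ hφ
  by_contra hnot
  have hneg : (m.box φ.neg.neg).neg ∈ Δ :=
    h _ (mem_of_prov_impl (m.prov_impl_box_neg_box_neg φ.neg) (neg_mem_iff.2 hnot))
  exact neg_mem_iff.1 hneg
    (mem_of_prov_impl (m.prov_box_impl_box (Prov.impl_neg_neg φ)) hφ)

theorem accessible_comm : Accessible m Γ Δ ↔ Accessible m Δ Γ :=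
  ⟨Accessible.symm, Accessible.symm⟩

theorem Accessible.of_abilities_subset (hmn : m.abilities ⊆ n.abilities)
    (h : Accessible n Γ Δ) : Accessible m Γ Δ :=
  fun φ hφ => h φ (mem_of_prov_impl (Modality.prov_box_impl_box_of_abilities_subset hmn φ) hφ)

theorem box_mem_of_derivable (h : Derivable {ψ | m.box ψ ∈ Γ} φ) : m.box φ ∈ Γ := by
  induction h with
  | prov hφ => exact mem_of_prov (m.prov_box hφ)
  | hyp hφ => exact hφ
  | mp _ _ ihimpl ih => exact mp (mem_of_prov_impl (m.prov_box_impl_distrib _ _) ihimpl) ih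

theorem exists_accessible_of_box_notMem (h : m.box φ ∉ Γ) : ∃ Δ, Accessible m Γ Δ ∧ φ ∉ Δ :=
  exists_of_not_derivable fun hφ => h (box_mem_of_derivable hφ)

end MaxConsistent

open scoped symmDiff

/-- States of the canonical similarity model: a maximal consistent set together with a vertex of the
hypercube of sets of modalities. -/
abbrev CanonicalState (Ag : Type) : Type := MaxConsistent Ag × Set (Modality Ag)

namespace CanonicalState

/-- The `m`-edges of the canonical model that run in direction `m` of the hypercube. -/
def Edge (m : Modality Ag) (s t : CanonicalState Ag) : Prop :=
  s.2 ∆ t.2 = {m} ∧ MaxConsistent.Accessible m s.1 t.1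

/-- The abilities provided by the edges between `s` and `t`. -/
def sharedAbilities (s t : CanonicalState Ag) : Set (Finset Ag) :=
  {X | ∃ m, Edge m s t ∧ X ∈ m.abilities}

variable {m n : Modality Ag} {s t : CanonicalState Ag}

theorem edge_comm : Edge m s t ↔ Edge m t s := by
  rw [Edge, Edge, symmDiff_comm, MaxConsistent.accessible_comm]

theorem Edge.label_unique (hm : Edge m s t) (hn : Edge n s t) : m = n :=
  Set.singleton_injective (hm.1.symm.trans hn.1)

theorem sharedAbilities_comm (s t : CanonicalState Ag) :
    sharedAbilities s t = sharedAbilities t s := by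
  simp only [sharedAbilities, edge_comm (s := s)]

theorem sharedAbilities_ne_univ (s t : CanonicalState Ag) : sharedAbilities s t ≠ Set.univ :=
  (Set.ne_univ_iff_exists_notMem _).2 ⟨∅, fun ⟨m, _, hm⟩ => m.empty_notMem_abilities hm⟩

theorem Edge.sharedAbilities_eq (h : Edge m s t) : sharedAbilities s t = m.abilities := by
  ext X
  refine ⟨fun ⟨n, hn, hX⟩ => ?_, fun hX => ⟨m, h, hX⟩⟩
  rwa [h.label_unique hn]

theorem accessible_of_abilities_subset (h : m.abilities ⊆ sharedAbilities s t) :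
    MaxConsistent.Accessible m s.1 t.1 := by
  obtain ⟨X, hX⟩ := m.abilities_nonempty
  obtain ⟨n, hn, _⟩ := h hX
  rw [hn.sharedAbilities_eq] at h
  exact hn.2.of_abilities_subset h

theorem forall_abilities_subset_iff_box_mem {φ : Formula Ag} :
    (∀ t, m.abilities ⊆ sharedAbilities s t → φ ∈ t.1) ↔ m.box φ ∈ s.1 := by
  refine ⟨fun h => ?_, fun h t hst => accessible_of_abilities_subset hst φ h⟩
  by_contra hnot
  obtain ⟨Δ, hΔ, hφ⟩ := MaxConsistent.exists_accessible_of_box_notMem hnot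
  have hedge : Edge m s (Δ, s.2 ∆ {m}) := ⟨symmDiff_symmDiff_cancel_left _ _, hΔ⟩
  exact hφ (h _ hedge.sharedAbilities_eq.ge)

end CanonicalState

/-- The canonical similarity model. Its abilities are the finite sets of agents, and agent `a` has
the abilities `X` with `a ∈ X`. -/
def canonicalModel (Ag : Type) [Nonempty (MaxConsistent Ag)] : SimModel Ag where
  W := CanonicalState Ag
  A := Finset Ag
  w_nonempty := inferInstance
  E := CanonicalState.sharedAbilities
  Cap a := {X | a ∈ X}
  val s := {p | Formula.atom p ∈ s.1}
  positivity s t h := (CanonicalState.sharedAbilities_ne_univ s t h).elim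
  symmetry := CanonicalState.sharedAbilities_comm

theorem canonicalModel_sat_iff_mem [Nonempty (MaxConsistent Ag)] (φ : Formula Ag)
    (s : CanonicalState Ag) : (canonicalModel Ag).sat s φ ↔ φ ∈ s.1 := by
  have sat_box_iff (m : Modality Ag) {φ : Formula Ag} {s : CanonicalState Ag}
      (ih : ∀ t : CanonicalState Ag, (canonicalModel Ag).sat t φ ↔ φ ∈ t.1) :
      (∀ t : CanonicalState Ag, m.abilities ⊆ CanonicalState.sharedAbilities s t →
        (canonicalModel Ag).sat t φ) ↔ m.box φ ∈ s.1 := by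
    simp only [ih, CanonicalState.forall_abilities_subset_iff_box_mem]
  induction φ generalizing s with
  | atom p => exact Iff.rfl
  | neg φ ih => exact (not_congr (ih s)).trans MaxConsistent.neg_mem_iff.symm
  | impl φ ψ ihφ ihψ => exact (imp_congr (ihφ s) (ihψ s)).trans MaxConsistent.impl_mem_iff.symm
  | K a φ ih =>
    have habilities : (Modality.D {a} (Finset.singleton_nonempty a)).abilities = {X | a ∈ X} := by
      simp [Modality.abilities]
    rw [MaxConsistent.K_mem_iff, ← sat_box_iff _ ih, habilities]
    exact Iff.rfl
  | D G hG φ ih => exact sat_box_iff (.D G hG) ih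
  | F G hG φ ih => exact sat_box_iff (.F G hG) ih

end

theorem stmt_18_general {Ag : Type} (Φ : Set (Formula Ag)) (φ : Formula Ag)
    (h : ∀ (M : SimModel Ag) (s : M.W), (∀ ψ ∈ Φ, M.sat s ψ) → M.sat s φ) :
    ∃ L : List (Formula Ag), (∀ ψ ∈ L, ψ ∈ Φ) ∧
      Prov ((L.foldr Formula.and Formula.top).impl φ) := by
  suffices hder : Derivable Φ φ from hder.exists_prov_foldr_and_impl
  by_contra hnot
  obtain ⟨Γ, hΦΓ, hφΓ⟩ := MaxConsistent.exists_of_not_derivable hnot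
  have : Nonempty (MaxConsistent Ag) := ⟨Γ⟩
  have hsat : (canonicalModel Ag).sat (Γ, ∅) φ :=
    h _ _ fun ψ hψ => (canonicalModel_sat_iff_mem ψ (Γ, ∅)).2 (hΦΓ ψ hψ)
  exact hφΓ ((canonicalModel_sat_iff_mem φ (Γ, ∅)).1 hsat)

/-- strong completeness of ELDF: if `Φ` semantically entails
`φ` over similarity models, then some finite conjunction `ψ₁ ∧ … ∧ ψₙ` of
members of `Φ` is such that `(ψ₁ ∧ … ∧ ψₙ) → φ` is a theorem of ELDF. -/
theorem stmt_18 {Ag : Type} [Fintype Ag] [Nonempty Ag]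
    (Φ : Set (Formula Ag)) (φ : Formula Ag)
    (h : ∀ (M : SimModel Ag) (s : M.W), (∀ ψ ∈ Φ, M.sat s ψ) → M.sat s φ) :
    ∃ L : List (Formula Ag), (∀ ψ ∈ L, ψ ∈ Φ) ∧
      Prov ((L.foldr Formula.and Formula.top).impl φ) :=
  stmt_18_general Φ φ h
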